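/- arXiv:2403.16309 — 3 statements merged into one kernel-verified Lean document; each statement's English description precedes it below -/
import Mathlib

section
/- Let A be a complex Banach algebra admitting a contractive approximate identity, let E be a complex Banach space, and let π : A → 𝓛(E) be an isometric nondegenerate representation. Set B = {t ∈ 𝓛(E) : t∘π(a) ∈ π(A) and π(a)∘t ∈ π(A) for all a ∈ A}, the two-sided multipliers of π(A). Then there is an isometric algebra isomorphism Φ : M(A) → B such that Φ(ι_A(a)) = π(a) for all a ∈ A and, for every (L,R) ∈ M(A) and a ∈ A, Φ(L,R)∘π(a) = π(L(a)) and π(a)∘Φ(L,R) = π(R(a)). -/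
/-!
Every double centralizer `T = (L, R)` is realised on `E` by the strong limit `t ξ = lim π (L e_l) ξ`.
The operators `π (L e_l)` are bounded by `‖L‖`, and on vectors `π a ξ` they converge to
`π (L a) ξ`, because `L e_l * a = L (e_l * a)`; since such vectors span a dense subspace, the limit
exists everywhere (`exists_clm_tendsto`, `exists_clm_of_doubleCentralizer`). Passing to the limit in
`a * L e_l = R a * e_l` gives `π a ∘ t = π (R a)`.

The relation `t ∘ π a = π (L a)` for all `a` determines `t` by nondegeneracy
(`clm_ext_of_nondegenerate`), and this uniqueness yields all the algebraic identities. Conversely,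
for a two-sided multiplier `t` of `π(A)` the elements `L a`, `R a` with `t ∘ π a = π (L a)` and
`π a ∘ t = π (R a)` form a double centralizer, because `π` is injective and isometric
(`exists_doubleCentralizer_of_clm`).
-/

open MultiplierAlgebra
open Filter Topology

/-- A uniformly bounded net of operators converging strongly on a total set converges strongly
everywhere, to an operator with the same bound. -/
lemma exists_clm_tendsto {E : Type*} [NormedAddCommGroup E] [NormedSpace ℂ E] [CompleteSpace E]
    {Λ : Type*} {l : Filter Λ} [l.NeBot] (F : Λ → E →L[ℂ] E) (C : ℝ) (hC : 0 ≤ C)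
    (hF : ∀ i, ‖F i‖ ≤ C) (s : Set E) (hs : Dense (↑(Submodule.span ℂ s) : Set E))
    (h : ∀ x ∈ s, ∃ y, Tendsto (fun i => F i x) l (𝓝 y)) :
    ∃ t : E →L[ℂ] E, ‖t‖ ≤ C ∧ ∀ x, Tendsto (fun i => F i x) l (𝓝 (t x)) := by
  have hspan : ∀ x ∈ Submodule.span ℂ s, ∃ y, Tendsto (fun i => F i x) l (𝓝 y) := by
    intro x hx
    induction hx using Submodule.span_induction with
    | mem x hx => exact h x hx
    | zero => exact ⟨0, by simp⟩
    | add x y _ _ hx hy =>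
      obtain ⟨u, hu⟩ := hx
      obtain ⟨v, hv⟩ := hy
      exact ⟨u + v, by simpa using hu.add hv⟩
    | smul c x _ hx =>
      obtain ⟨u, hu⟩ := hx
      exact ⟨c • u, by simpa using hu.const_smul c⟩
  have hbd : ∀ i x, ‖F i x‖ ≤ C * ‖x‖ := fun i x => (F i).le_of_opNorm_le (hF i) x
  have hall : ∀ x, ∃ y, Tendsto (fun i => F i x) l (𝓝 y) := by
    intro x
    apply cauchy_map_iff_exists_tendsto.1
    rw [Metric.cauchy_iff]
    refine ⟨inferInstance, fun ε hε => ?_⟩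
    obtain ⟨z, hz, hxz⟩ := Metric.dense_iff.1 hs x (ε / (4 * (C + 1))) (by positivity)
    obtain ⟨y, hy⟩ := hspan z hxz
    have hxz' : C * ‖x - z‖ ≤ ε / 4 := by
      have h1 : ‖x - z‖ < ε / (4 * (C + 1)) := by
        rw [← dist_eq_norm, dist_comm]; exact hz
      rw [lt_div_iff₀ (by positivity)] at h1
      nlinarith [norm_nonneg (x - z)]
    have hclose : ∀ i, dist (F i x) (F i z) ≤ ε / 4 := fun i => by
      rw [dist_eq_norm, ← map_sub]
      exact (hbd i _).trans hxz'
    refine ⟨(fun i => F i x) '' {i | dist (F i z) y < ε / 4},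
      image_mem_map (hy (Metric.ball_mem_nhds y (by positivity))), ?_⟩
    rintro _ ⟨i, hi, rfl⟩ _ ⟨j, hj, rfl⟩
    have hi' : dist (F i z) y < ε / 4 := hi
    have hj' : dist (F j z) y < ε / 4 := hj
    have h1 := hclose i
    have h2 := hclose j
    have h3 := dist_triangle4 (F i x) (F i z) (F j z) (F j x)
    have h4 := dist_triangle_right (F i z) (F j z) y
    rw [dist_comm (F j z) (F j x)] at h3
    change dist (F i x) (F j x) < ε
    linarith
  choose f hf using hall
  let g : E →ₗ[ℂ] E :=
    { toFun := f
      map_add' := fun x y =>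
        tendsto_nhds_unique (hf (x + y)) (by simpa using (hf x).add (hf y))
      map_smul' := fun c x =>
        tendsto_nhds_unique (hf (c • x)) (by simpa using (hf x).const_smul c) }
  have hg : ∀ x, ‖g x‖ ≤ C * ‖x‖ := fun x =>
    le_of_tendsto (hf x).norm (Eventually.of_forall fun i => hbd i x)
  exact ⟨g.mkContinuous C hg, g.mkContinuous_norm_le hC hg, hf⟩

section

variable {A : Type*} [NonUnitalNormedRing A] [NormedSpace ℂ A]
  {E : Type*} [NormedAddCommGroup E] [NormedSpace ℂ E]
  (π : A →ₙₐ[ℂ] (E →L[ℂ] E))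

lemma clm_ext_of_nondegenerate
    (hnd : Dense (↑(Submodule.span ℂ {x : E | ∃ (a : A) (ξ : E), x = π a ξ}) : Set E))
    {s t : E →L[ℂ] E} (h : ∀ a, s.comp (π a) = t.comp (π a)) : s = t := by
  refine ContinuousLinearMap.ext_on hnd ?_
  rintro _ ⟨a, ξ, rfl⟩
  exact DFunLike.congr_fun (h a) ξ

variable [IsScalarTower ℂ A A] [SMulCommClass ℂ A A]

lemma exists_clm_of_doubleCentralizer [CompleteSpace E]
    {Λ : Type*} {l : Filter Λ} [l.NeBot]
    (e : Λ → A) (he : ∀ i, ‖e i‖ ≤ 1)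
    (hRcai : ∀ a : A, Tendsto (fun i => a * e i) l (𝓝 a))
    (hLcai : ∀ a : A, Tendsto (fun i => e i * a) l (𝓝 a))
    (hiso : ∀ a : A, ‖π a‖ = ‖a‖)
    (hnd : Dense (↑(Submodule.span ℂ {x : E | ∃ (a : A) (ξ : E), x = π a ξ}) : Set E))
    (T : 𝓜(ℂ, A)) :
    ∃ t : E →L[ℂ] E, ‖t‖ ≤ ‖T‖ ∧
      ∀ a, t.comp (π a) = π (T.fst a) ∧ (π a).comp t = π (T.snd a) := by
  have hπc : Continuous π := AddMonoidHomClass.continuous_of_bound π 1 fun a => by simp [hiso]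
  have hπx : ∀ ξ : E, Continuous fun a => π a ξ := fun ξ =>
    (ContinuousLinearMap.apply ℂ E ξ).continuous.comp hπc
  -- `L` is a left multiplier: `x * L (a * b) = R x * a * b = x * (L a * b)`, then let `x = e i`.
  have hL : ∀ a b, T.fst (a * b) = T.fst a * b := fun a b =>
    tendsto_nhds_unique (hLcai (T.fst (a * b))) <| (hLcai (T.fst a * b)).congr fun i => by
      rw [← mul_assoc, ← T.central, ← T.central, mul_assoc]
  have hTn : ‖T.fst‖ ≤ ‖T‖ := by
    rw [DoubleCentralizer.norm_def]
    exact norm_fst_le (T.fst, T.snd)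
  have hlim : ∀ a ξ, Tendsto (fun i => π (T.fst (e i)) (π a ξ)) l (𝓝 (π (T.fst a) ξ)) := by
    intro a ξ
    refine (((hπx ξ).comp T.fst.continuous).tendsto a |>.comp (hLcai a)).congr fun i => ?_
    simp [hL]
  obtain ⟨t, ht, hlt⟩ := exists_clm_tendsto (l := l) (fun i => π (T.fst (e i))) ‖T‖
    (norm_nonneg _)
    (fun i => by
      rw [hiso]
      calc ‖T.fst (e i)‖ ≤ ‖T.fst‖ * 1 := T.fst.le_opNorm_of_le (he i)
        _ ≤ ‖T‖ := by simpa using hTn)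
    _ hnd (by
      rintro _ ⟨a, ξ, rfl⟩
      exact ⟨_, hlim a ξ⟩)
  refine ⟨t, ht, fun a => ⟨?_, ?_⟩⟩
  · ext ξ
    exact tendsto_nhds_unique (hlt (π a ξ)) (hlim a ξ)
  · ext ξ
    refine tendsto_nhds_unique (((π a).continuous.tendsto _).comp (hlt ξ)) ?_
    refine ((hπx ξ).tendsto _ |>.comp (hRcai (T.snd a))).congr fun i => ?_
    simp [T.central]

/-- The norm of a double centralizer is at most that of any operator implementing it. -/
lemma doubleCentralizer_norm_le (hiso : ∀ a : A, ‖π a‖ = ‖a‖) {T : 𝓜(ℂ, A)} {t : E →L[ℂ] E}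
    (h : ∀ a, t.comp (π a) = π (T.fst a) ∧ (π a).comp t = π (T.snd a)) : ‖T‖ ≤ ‖t‖ := by
  rw [DoubleCentralizer.norm_def]
  refine norm_prod_le_iff.2 ⟨?_, ?_⟩
  · refine ContinuousLinearMap.opNorm_le_bound _ (norm_nonneg _) fun a => ?_
    change ‖T.fst a‖ ≤ _
    rw [← hiso (T.fst a), ← (h a).1, ← hiso a]
    exact ContinuousLinearMap.opNorm_comp_le _ _
  · refine ContinuousLinearMap.opNorm_le_bound _ (norm_nonneg _) fun a => ?_
    change ‖T.snd a‖ ≤ _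
    rw [← hiso (T.snd a), ← (h a).2, ← hiso a, mul_comm]
    exact ContinuousLinearMap.opNorm_comp_le _ _

lemma exists_doubleCentralizer_of_clm (hiso : ∀ a : A, ‖π a‖ = ‖a‖) {t : E →L[ℂ] E}
    (h₁ : ∀ a : A, ∃ b : A, t.comp (π a) = π b) (h₂ : ∀ a : A, ∃ b : A, (π a).comp t = π b) :
    ∃ T : 𝓜(ℂ, A), ∀ a, t.comp (π a) = π (T.fst a) ∧ (π a).comp t = π (T.snd a) := by
  have hinj : Function.Injective π :=
    (AddMonoidHomClass.isometry_of_norm π hiso).injective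
  choose L hL using h₁
  choose R hR using h₂
  let L' : A →ₗ[ℂ] A :=
    { toFun := L
      map_add' := fun a b => hinj (by simp [← hL])
      map_smul' := fun c a => hinj (by simp [← hL]) }
  let R' : A →ₗ[ℂ] A :=
    { toFun := R
      map_add' := fun a b => hinj (by simp [← hR])
      map_smul' := fun c a => hinj (by simp [← hR]) }
  refine ⟨⟨(L'.mkContinuous ‖t‖ fun a => ?_, R'.mkContinuous ‖t‖ fun a => ?_), fun a b => hinj ?_⟩,
    fun a => ⟨hL a, hR a⟩⟩
  · change ‖L a‖ ≤ _
    rw [← hiso (L a), ← hL, ← hiso a]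
    exact ContinuousLinearMap.opNorm_comp_le _ _
  · change ‖R a‖ ≤ _
    rw [← hiso (R a), ← hR, ← hiso a, mul_comm]
    exact ContinuousLinearMap.opNorm_comp_le _ _
  · change π (R a * b) = π (a * L b)
    rw [map_mul, map_mul, ← hR, ← hL]
    rfl

end

/-- Let `A` be a complex Banach algebra with a contractive approximate identity,
`E` a complex Banach space, and `π : A → 𝓛(E)` an isometric nondegenerate representation.  Let
`B = {t ∈ 𝓛(E) : t ∘ π(a) ∈ π(A) and π(a) ∘ t ∈ π(A) for all a}` be the two-sided multipliers of
`π(A)`.  Then there is an isometric algebra isomorphism `Φ : M(A) → B` with `Φ (ι_A a) = π a`,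
`Φ T ∘ π a = π (T.fst a)` and `π a ∘ Φ T = π (T.snd a)`. -/
theorem multiplierAlgebra_eq_twoSided_multipliers
    {A : Type*} [NonUnitalNormedRing A] [NormedSpace ℂ A]
    [IsScalarTower ℂ A A] [SMulCommClass ℂ A A] [CompleteSpace A]
    {Λ : Type*} [Nonempty Λ] [Preorder Λ] [IsDirected Λ (· ≤ ·)]
    (e : Λ → A) (he : ∀ l, ‖e l‖ ≤ 1)
    (hRcai : ∀ a : A, Filter.Tendsto (fun l => a * e l) Filter.atTop (nhds a))
    (hLcai : ∀ a : A, Filter.Tendsto (fun l => e l * a) Filter.atTop (nhds a))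
    (E : Type*) [NormedAddCommGroup E] [NormedSpace ℂ E] [CompleteSpace E]
    (π : A →ₙₐ[ℂ] (E →L[ℂ] E)) (hiso : ∀ a : A, ‖π a‖ = ‖a‖)
    (hnd : Dense (↑(Submodule.span ℂ {x : E | ∃ (a : A) (ξ : E), x = π a ξ}) : Set E)) :
    ∃ Φ : 𝓜(ℂ, A) → (E →L[ℂ] E),
      Function.Injective Φ ∧
      Set.range Φ = {t : E →L[ℂ] E |
        (∀ a : A, ∃ b : A, t.comp (π a) = π b) ∧ (∀ a : A, ∃ b : A, (π a).comp t = π b)} ∧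
      (∀ T : 𝓜(ℂ, A), ‖Φ T‖ = ‖T‖) ∧
      (∀ S T : 𝓜(ℂ, A), Φ (S + T) = Φ S + Φ T) ∧
      (∀ (c : ℂ) (T : 𝓜(ℂ, A)), Φ (c • T) = c • Φ T) ∧
      (∀ S T : 𝓜(ℂ, A), Φ (S * T) = Φ S * Φ T) ∧
      (∀ a : A, Φ (DoubleCentralizer.coe ℂ a) = π a) ∧
      (∀ (T : 𝓜(ℂ, A)) (a : A),
        (Φ T).comp (π a) = π (T.fst a) ∧ (π a).comp (Φ T) = π (T.snd a)) := by
  have hinj : Function.Injective π :=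
    (AddMonoidHomClass.isometry_of_norm π hiso).injective
  choose Φ hn hΦ using exists_clm_of_doubleCentralizer π e he hRcai hLcai hiso hnd
  have huniq : ∀ (T : 𝓜(ℂ, A)) (t : E →L[ℂ] E), (∀ a, t.comp (π a) = π (T.fst a)) → Φ T = t :=
    fun T t h => clm_ext_of_nondegenerate π hnd fun a => by rw [(hΦ T a).1, h]
  refine ⟨Φ, ?_, ?_, ?_, ?_, ?_, ?_, ?_, hΦ⟩
  · intro S T h
    refine DoubleCentralizer.ext ℂ A S T (Prod.ext ?_ ?_)
    · ext a
      exact hinj (by rw [← (hΦ S a).1, ← (hΦ T a).1, h])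
    · ext a
      exact hinj (by rw [← (hΦ S a).2, ← (hΦ T a).2, h])
  · ext t
    constructor
    · rintro ⟨T, rfl⟩
      exact ⟨fun a => ⟨_, (hΦ T a).1⟩, fun a => ⟨_, (hΦ T a).2⟩⟩
    · rintro ⟨h₁, h₂⟩
      obtain ⟨T, hT⟩ := exists_doubleCentralizer_of_clm π hiso h₁ h₂
      exact ⟨T, huniq T t fun a => (hT a).1⟩
  · exact fun T => le_antisymm (hn T) (doubleCentralizer_norm_le π hiso (hΦ T))
  · refine fun S T => huniq _ _ fun a => ?_
    rw [ContinuousLinearMap.add_comp, (hΦ S a).1, (hΦ T a).1, ← map_add]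
    rfl
  · refine fun c T => huniq _ _ fun a => ?_
    rw [ContinuousLinearMap.smul_comp, (hΦ T a).1, ← map_smul]
    rfl
  · refine fun S T => huniq _ _ fun a => ?_
    rw [ContinuousLinearMap.mul_def, ContinuousLinearMap.comp_assoc, (hΦ T a).1, (hΦ S _).1]
    rfl
  · refine fun a => huniq _ _ fun b => ?_
    rw [DoubleCentralizer.coe_fst, ContinuousLinearMap.mul_apply', map_mul]
    rfl
end

section
/- Let G be a finite group with n = card(G) ≥ 2 and let p ∈ [1,∞). Then ((n−1)^p + (n−1))^{1/p} / n ≤ ‖𝟙₀‖_{(p)} ≤ 2 − 2/n, where ‖𝟙₀‖_{(p)} is the operator norm of the convolution operator λ_p(𝟙₀) on ℓ^p(G). Moreover, the ℓ¹-norm of 𝟙₀ is exactly ‖𝟙₀‖₁ = 2 − 2/n. -/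
/-!
Since `∑ g, Δ_g = 𝟙 - n δ_1`, the function `𝟙₀` is `δ_1 - 1/n`: it takes the value `1 - 1/n` at the
identity and `-1/n` at the `n - 1` other points (`sum_one0` sums over `G` along this split). This
gives the `ℓ¹`-norm. The upper bound is the general inequality `‖λ_p(a)‖ ≤ ‖a‖₁` (`norm_lam_le`),
which holds because `λ_p(a)` is the combination, with coefficients `a h`, of the left translations,
and these are isometries of `ℓ^p(G)`. The lower bound tests the operator on the unit vector `δ_1`,
which it sends to `𝟙₀` (`norm_toLp_le_norm_lam`).
-/

open scoped ENNReal

noncomputable section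

/-- Convolution of functions on a finite group: `(a * b) g = ∑ h, a h * b (h⁻¹ g)`. -/
def conv {G : Type*} [Group G] [Fintype G] (a b : G → ℂ) : G → ℂ :=
  fun g => ∑ h : G, a h * b (h⁻¹ * g)

/-- The indicator function `δ_g`. -/
def delta {G : Type*} [Group G] [DecidableEq G] (g : G) : G → ℂ :=
  fun h => if h = g then 1 else 0

/-- `Δ_g = δ_g − δ_{1_G}`. -/
def Del {G : Type*} [Group G] [DecidableEq G] (g : G) : G → ℂ :=
  delta g - delta 1

/-- `𝟙₀ = −(1/n) ∑_{g ∈ G} Δ_g`, the identity of the augmentation ideal `ℓ₀¹(G)`. -/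
def one0 (G : Type*) [Group G] [Fintype G] [DecidableEq G] : G → ℂ :=
  -((Fintype.card G : ℂ))⁻¹ • ∑ g : G, Del g

/-- `λ_p(a)`: the operator of left convolution by `a` on `ℓ^p(G)`. -/
def lam {G : Type*} [Group G] [Fintype G] (p : ℝ≥0∞) [Fact (1 ≤ p)] (a : G → ℂ) :
    (PiLp p fun _ : G => ℂ) →L[ℂ] (PiLp p fun _ : G => ℂ) :=
  LinearMap.toContinuousLinearMap
    { toFun := fun b => (WithLp.equiv p (G → ℂ)).symm (conv a (WithLp.equiv p (G → ℂ) b))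
      map_add' := by
        intro b c
        apply (WithLp.equiv p (G → ℂ)).injective
        funext g
        simp [conv, mul_add, Finset.sum_add_distrib]
      map_smul' := by
        intro c b
        apply (WithLp.equiv p (G → ℂ)).injective
        funext g
        simp [conv, Finset.mul_sum, mul_left_comm] }

theorem one0_apply (G : Type*) [Group G] [Fintype G] [DecidableEq G] (g : G) :
    one0 G g = (if g = 1 then 1 else 0) - ((Fintype.card G : ℂ))⁻¹ := by
  have h : (Fintype.card G : ℂ) ≠ 0 := Nat.cast_ne_zero.mpr Fintype.card_ne_zero
  simp only [one0, Del, delta, Pi.smul_apply, Finset.sum_apply, Pi.sub_apply,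
    Finset.sum_sub_distrib, Finset.sum_ite_eq, Finset.mem_univ, if_true, Finset.sum_const,
    Finset.card_univ, nsmul_eq_mul, smul_eq_mul, Pi.mul_apply, Pi.natCast_apply]
  field_simp
  ring

/-- A sum over `G` of a function of `|𝟙₀ g|`, split according to whether `g = 1`. -/
theorem sum_one0 (G : Type*) [Group G] [Fintype G] [DecidableEq G] (f : ℝ → ℝ) :
    ∑ g : G, f ‖one0 G g‖ = f (((Fintype.card G : ℝ) - 1) / Fintype.card G)
      + ((Fintype.card G : ℝ) - 1) * f (1 / Fintype.card G) := by
  have hpos : 0 < Fintype.card G := Fintype.card_pos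
  have h0 : (0 : ℝ) < Fintype.card G := Nat.cast_pos.mpr hpos
  have h1 : (1 : ℝ) ≤ Fintype.card G := Nat.one_le_cast.mpr hpos
  rw [← Finset.add_sum_erase _ _ (Finset.mem_univ (1 : G))]
  congr 1
  · have : one0 G 1 = ((((Fintype.card G : ℝ) - 1) / Fintype.card G : ℝ) : ℂ) := by
      rw [one0_apply, if_pos rfl]
      push_cast
      have : (Fintype.card G : ℂ) ≠ 0 := Nat.cast_ne_zero.mpr hpos.ne'
      field_simp
    rw [this, Complex.norm_real, Real.norm_of_nonneg (div_nonneg (by linarith) h0.le)]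
  · rw [Finset.sum_congr rfl (g := fun _ => f (1 / Fintype.card G))]
    · rw [Finset.sum_const, Finset.card_erase_of_mem (Finset.mem_univ _), Finset.card_univ,
        nsmul_eq_mul, Nat.cast_sub hpos, Nat.cast_one]
    · intro g hg
      rw [one0_apply, if_neg (Finset.ne_of_mem_erase hg)]
      simp

theorem lam_apply {G : Type*} [Group G] [Fintype G] (p : ℝ≥0∞) [Fact (1 ≤ p)] (a : G → ℂ)
    (b : PiLp p fun _ : G => ℂ) (g : G) : lam p a b g = ∑ h : G, a h * b (h⁻¹ * g) := rfl

/-- Convolution by `a` is bounded on `ℓ^p(G)` by the `ℓ¹`-norm of `a`. -/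
theorem norm_lam_le {G : Type*} [Group G] [Fintype G] (p : ℝ≥0∞) [Fact (1 ≤ p)] (a : G → ℂ) :
    ‖lam p a‖ ≤ ∑ h : G, ‖a h‖ := by
  refine ContinuousLinearMap.opNorm_le_bound _ (Finset.sum_nonneg fun _ _ => norm_nonneg _) ?_
  intro b
  have key : lam p a b = ∑ h : G,
      a h • LinearIsometryEquiv.piLpCongrLeft p ℂ ℂ (Equiv.mulLeft h) b := by
    ext g
    rw [lam_apply, WithLp.ofLp_sum, Finset.sum_apply]
    refine Finset.sum_congr rfl fun h _ => ?_
    simp [LinearIsometryEquiv.piLpCongrLeft_apply, Equiv.piCongrLeft'_apply]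
  rw [key, Finset.sum_mul]
  refine (norm_sum_le _ _).trans (Finset.sum_le_sum fun h _ => ?_)
  rw [norm_smul, LinearIsometryEquiv.norm_map]

/-- The operator norm dominates the `ℓ^p`-norm of `a`, since `δ_1` is a unit vector and
`a * δ_1 = a`. -/
theorem norm_toLp_le_norm_lam {G : Type*} [Group G] [Fintype G] [DecidableEq G]
    (p : ℝ≥0∞) [Fact (1 ≤ p)] (a : G → ℂ) :
    ‖(WithLp.toLp p a : PiLp p fun _ : G => ℂ)‖ ≤ ‖lam p a‖ := by
  have h := (lam p a).le_opNorm (PiLp.single p (1 : G) (1 : ℂ))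
  rw [PiLp.norm_single, norm_one, mul_one] at h
  suffices e : lam p a (PiLp.single p (1 : G) (1 : ℂ)) = WithLp.toLp p a by rwa [e] at h
  ext g
  rw [lam_apply, Finset.sum_eq_single g]
  · simp
  · intro k _ hk
    have : k⁻¹ * g ≠ 1 := fun e => hk (inv_mul_eq_one.mp e)
    simp [this]
  · simp

/-- Let `G` be a finite group with `n = card G ≥ 2` and `p ∈ [1, ∞)`.  Then
`((n−1)^p + (n−1))^{1/p} / n ≤ ‖λ_p(𝟙₀)‖ ≤ 2 − 2/n`, where `‖λ_p(𝟙₀)‖` is the operator norm of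
the convolution operator `λ_p(𝟙₀)` on `ℓ^p(G)`; moreover `‖𝟙₀‖₁ = ∑_g |𝟙₀ g| = 2 − 2/n`. -/
theorem one0_norm_bounds
    (G : Type*) [Group G] [Fintype G] [DecidableEq G]
    (hn : 2 ≤ Fintype.card G)
    (p : ℝ≥0∞) [Fact (1 ≤ p)] (hp : p ≠ ∞) :
    ((((Fintype.card G : ℝ) - 1) ^ p.toReal + ((Fintype.card G : ℝ) - 1)) ^ (1 / p.toReal))
        / (Fintype.card G : ℝ) ≤ ‖lam p (one0 G)‖ ∧
    ‖lam p (one0 G)‖ ≤ 2 - 2 / (Fintype.card G : ℝ) ∧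
    ∑ g : G, ‖one0 G g‖ = 2 - 2 / (Fintype.card G : ℝ) := by
  have h1 : (1 : ℝ) ≤ Fintype.card G := by exact_mod_cast le_trans one_le_two hn
  have h0 : (0 : ℝ) < Fintype.card G := by linarith
  have hl1 : ∑ g : G, ‖one0 G g‖ = 2 - 2 / (Fintype.card G : ℝ) := by
    rw [sum_one0 G fun x => x]
    field_simp
    ring
  refine ⟨?_, (norm_lam_le p _).trans hl1.le, hl1⟩
  have hp0 : 0 < p.toReal :=
    ENNReal.toReal_pos (zero_lt_one.trans_le Fact.out).ne' hp
  refine le_trans (le_of_eq ?_) (norm_toLp_le_norm_lam p (one0 G))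
  rw [PiLp.norm_eq_sum hp0]
  have hn1 : (0 : ℝ) ≤ (Fintype.card G : ℝ) - 1 := by linarith
  rw [sum_one0 G fun x => x ^ p.toReal, Real.div_rpow hn1 h0.le, Real.div_rpow zero_le_one h0.le,
    Real.one_rpow, mul_one_div, ← add_div, Real.div_rpow (by positivity) (by positivity),
    one_div, Real.rpow_rpow_inv h0.le hp0.ne']

end
end

section
/- For every p ∈ (1,∞) with p ≠ 2, one has the strict inequality (2^p + 2)·(2^{1/(p−1)} + 1)^p > 3^p·(2^{p/(p−1)} + 2); equivalently, (2^p+2)(2^{1/(p−1)}+1)^p / (3^p(2^{p/(p−1)}+2)) > 1. (At p = 2 the two sides are equal.) -/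
/-!
With `t = p - 1` and `s = 1 / t`, both sides have the common factor `2 * (2 ^ s + 1)`, and the
inequality becomes `3 ^ (1 + t) < (2 ^ t + 1) * (2 ^ s + 1) ^ t`. The function
`x ↦ log (2 ^ x + 1)` is strictly convex, and its tangent at `1` gives
`3 * 2 ^ (2 * (x - 1) / 3) ≤ 2 ^ x + 1`, strictly for `x ≠ 1`. Using this at `x = t`, and at
`x = s` raised to the power `t`, the exponents of `2` are `2 * (t - 1) / 3` and
`2 * (1 - t) / 3`, so they cancel in the product.
-/

/-- The tangent-line bound at `1` for `log (2 ^ x + 1)`, in exponentiated form. In terms of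
`u = 2 ^ ((x - 1) / 3)` it says `0 < (u - 1) ^ 2 * (2 * u + 1)`. -/
lemma three_mul_two_rpow_lt (x : ℝ) (hx : x ≠ 1) :
    3 * (2 : ℝ) ^ (2 * (x - 1) / 3) < (2 : ℝ) ^ x + 1 := by
  have hu : 0 < (2 : ℝ) ^ ((x - 1) / 3) := by positivity
  have hu1 : (2 : ℝ) ^ ((x - 1) / 3) ≠ 1 := by
    intro h
    have h0 := congrArg Real.log h
    rw [Real.log_rpow two_pos, Real.log_one] at h0
    have := (mul_eq_zero.mp h0).resolve_right (Real.log_pos one_lt_two).ne'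
    exact hx (by linarith)
  have h2 : (2 : ℝ) ^ (2 * (x - 1) / 3) = ((2 : ℝ) ^ ((x - 1) / 3)) ^ 2 := by
    rw [← Real.rpow_mul_natCast (by norm_num)]
    congr 1
    push_cast
    ring
  have h3 : (2 : ℝ) ^ x = 2 * ((2 : ℝ) ^ ((x - 1) / 3)) ^ 3 := by
    rw [← Real.rpow_mul_natCast (by norm_num)]
    nth_rewrite 2 [← Real.rpow_one 2]
    rw [← Real.rpow_add (by norm_num)]
    congr 1
    push_cast
    ring
  rw [h2, h3]
  generalize (2 : ℝ) ^ ((x - 1) / 3) = u at hu hu1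
  have : 0 < (u - 1) ^ 2 * (2 * u + 1) :=
    mul_pos (by have := sub_ne_zero.mpr hu1; positivity) (by linarith)
  nlinarith

lemma three_rpow_lt (t : ℝ) (ht : 0 < t) (ht1 : t ≠ 1) :
    (3 : ℝ) ^ (1 + t) < ((2 : ℝ) ^ t + 1) * ((2 : ℝ) ^ (1 / t) + 1) ^ t := by
  have hs1 : 1 / t ≠ 1 := by
    intro h
    rw [div_eq_one_iff_eq ht.ne'] at h
    exact ht1 h.symm
  have h1 := three_mul_two_rpow_lt t ht1
  have h2 := Real.rpow_lt_rpow (by positivity) (three_mul_two_rpow_lt (1 / t) hs1) ht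
  rw [Real.mul_rpow (by norm_num) (by positivity), ← Real.rpow_mul (by norm_num)] at h2
  have hexp : 2 * (1 / t - 1) / 3 * t = -(2 * (t - 1) / 3) := by
    field_simp
    ring
  rw [hexp, Real.rpow_neg (by norm_num)] at h2
  have hpos : 0 < (2 : ℝ) ^ (2 * (t - 1) / 3) := by positivity
  calc (3 : ℝ) ^ (1 + t)
      = 3 * (2 : ℝ) ^ (2 * (t - 1) / 3) * (3 ^ t * ((2 : ℝ) ^ (2 * (t - 1) / 3))⁻¹) := by
        rw [Real.rpow_add (by norm_num), Real.rpow_one]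
        field_simp
    _ < _ := mul_lt_mul'' h1 h2 (by positivity) (by positivity)

/-- For every `p ∈ (1,∞)` with `p ≠ 2`,
`(2^p + 2)·(2^{1/(p−1)} + 1)^p > 3^p·(2^{p/(p−1)} + 2)` (real powers); while at `p = 2`
the two sides are equal. -/
theorem key_ratio_gt_one (p : ℝ) (hp : 1 < p) (hp2 : p ≠ 2) :
    (3 : ℝ) ^ p * ((2 : ℝ) ^ (p / (p - 1)) + 2)
        < ((2 : ℝ) ^ p + 2) * ((2 : ℝ) ^ (1 / (p - 1)) + 1) ^ p ∧
      ((2 : ℝ) ^ (2 : ℝ) + 2) * ((2 : ℝ) ^ (1 / ((2 : ℝ) - 1)) + 1) ^ (2 : ℝ)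
        = (3 : ℝ) ^ (2 : ℝ) * ((2 : ℝ) ^ ((2 : ℝ) / ((2 : ℝ) - 1)) + 2) := by
  refine ⟨?_, by norm_num⟩
  have ht : 0 < p - 1 := by linarith
  have key := three_rpow_lt (p - 1) ht (fun h => hp2 (by linarith))
  have e1 : (2 : ℝ) ^ (p / (p - 1)) = 2 * (2 : ℝ) ^ (1 / (p - 1)) := by
    nth_rewrite 2 [← Real.rpow_one 2]
    rw [← Real.rpow_add (by norm_num)]
    congr 1
    field_simp
    ring
  have e2 : (2 : ℝ) ^ p = 2 * (2 : ℝ) ^ (p - 1) := by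
    rw [Real.rpow_sub_one (by norm_num)]
    ring
  have hpos : 0 < (2 : ℝ) ^ (1 / (p - 1)) + 1 := by positivity
  have e3 : ((2 : ℝ) ^ (1 / (p - 1)) + 1) ^ p
      = ((2 : ℝ) ^ (1 / (p - 1)) + 1) ^ (p - 1) * ((2 : ℝ) ^ (1 / (p - 1)) + 1) := by
    rw [Real.rpow_sub_one hpos.ne', div_mul_cancel₀ _ hpos.ne']
  rw [add_sub_cancel] at key
  rw [e1, e2, e3]
  linarith [mul_lt_mul_of_pos_right key (mul_pos two_pos hpos)]
end
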